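/- Let p ≥ 1, 0 < β < 1, and let I and J be independent indices drawn uniformly from {1, …, p}. Define the random p × p matrix D = Id + β e_I (e_J − e_I)ᵀ. Then E[ Dᵀ D − (1/p) Dᵀ 𝟙 𝟙ᵀ D ] = μ ( Id − (1/p) 𝟙 𝟙ᵀ ), where μ = 1 − 2β(1−β)/p − 2β²/p². In particular 𝟙 lies in the kernel of this expected matrix, and for every x ∈ ℝᵖ one has xᵀ E[ Dᵀ D − (1/p) Dᵀ 𝟙 𝟙ᵀ D ] x = μ ‖x − x̄ 𝟙‖², where x̄ = (1/p) Σᵢ xᵢ. -/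

import Mathlib

/-!
Let `C = Id − 𝟙𝟙ᵀ/p`. The matrix being averaged is `Dᵀ C D`, and since `D = Id + β e_I uᵀ` with
`u = e_J − e_I`, it equals `C + β (C e_I uᵀ + u (C e_I)ᵀ) + β² (e_Iᵀ C e_I) u uᵀ`. For fixed `I` the
mean of `u` is `−C e_I`, so each cross term averages to `−C/p`; by the symmetry between `I` and `J`,
`E[u uᵀ] = −2 E[e_I uᵀ] = (2/p) C`, and `e_Iᵀ C e_I = 1 − 1/p` whatever `I` is. The coefficient of
`C` is therefore `1 − 2β/p + 2β² (1 − 1/p)/p = μ`. The kernel and the quadratic form are those of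
the projection `C`.
-/

open Matrix BigOperators

section RankOne

variable {ι m n R : Type*} [Fintype ι] [DecidableEq ι]

lemma transpose_mul_mul_one_add_smul_vecMulVec [CommSemiring R] {M : Matrix ι ι R}
    (hM : M.IsSymm) (c : R) (a u : ι → R) :
    (1 + c • vecMulVec a u)ᵀ * M * (1 + c • vecMulVec a u) =
      M + c • (vecMulVec (M *ᵥ a) u + vecMulVec u (M *ᵥ a)) +
        (c ^ 2 * (a ⬝ᵥ M *ᵥ a)) • vecMulVec u u := by
  have vecMul_eq : a ᵥ* M = M *ᵥ a := by rw [← mulVec_transpose, hM.eq]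
  simp only [transpose_add, transpose_one, transpose_smul, transpose_vecMulVec, add_mul, mul_add,
    one_mul, mul_one, smul_mul_assoc, mul_smul_comm, mul_vecMulVec, vecMulVec_mul, vecMul_eq,
    vecMulVec_mulVec, smul_vecMulVec, op_smul_eq_smul, dotProduct_comm (M *ᵥ a) a]
  module

lemma sum_vecMulVec_mulVec_single [NonAssocSemiring R] (A : Matrix m ι R) (B : Matrix n ι R) :
    ∑ i, vecMulVec (A *ᵥ Pi.single i 1) (B *ᵥ Pi.single i 1) = A * Bᵀ := by
  ext a b
  simp only [Matrix.sum_apply, vecMulVec_apply, mulVec_single_one, col_apply, mul_apply,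
    transpose_apply]

end RankOne

section Centering

variable {ι m 𝕜 : Type*} [Fintype ι] [DecidableEq ι] [Field 𝕜]

variable (ι 𝕜) in
/-- The matrix `Id − 𝟙𝟙ᵀ/p`, with `p` the number of indices, that subtracts from a vector its mean.
It is a projection only where `p` is invertible in `𝕜`. -/
def centeringMatrix : Matrix ι ι 𝕜 :=
  1 - (Fintype.card ι : 𝕜)⁻¹ • vecMulVec 1 1

namespace centeringMatrix

lemma isSymm : (centeringMatrix ι 𝕜).IsSymm := by
  simp only [Matrix.IsSymm, centeringMatrix, transpose_sub, transpose_one, transpose_smul,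
    transpose_vecMulVec]

lemma mulVec_apply (x : ι → 𝕜) (i : ι) :
    (centeringMatrix ι 𝕜 *ᵥ x) i = x i - (Fintype.card ι : 𝕜)⁻¹ * ∑ k, x k := by
  rw [centeringMatrix, sub_mulVec, one_mulVec, smul_mulVec, vecMulVec_mulVec, one_dotProduct]
  simp

lemma transpose_mul_mul (A : Matrix ι m 𝕜) :
    Aᵀ * centeringMatrix ι 𝕜 * A =
      Aᵀ * A - (Fintype.card ι : 𝕜)⁻¹ • (Aᵀ * (vecMulVec 1 1 : Matrix ι ι 𝕜) * A) := by
  simp only [centeringMatrix, Matrix.mul_sub, Matrix.sub_mul, Matrix.mul_one, Matrix.mul_smul,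
    Matrix.smul_mul]

lemma single_dotProduct_mulVec_single (i : ι) :
    Pi.single i 1 ⬝ᵥ centeringMatrix ι 𝕜 *ᵥ Pi.single i 1 = 1 - (Fintype.card ι : 𝕜)⁻¹ := by
  rw [single_one_dotProduct, mulVec_apply, Pi.single_eq_same, Fintype.sum_pi_single', mul_one]

lemma mulVec_one (hι : (Fintype.card ι : 𝕜) ≠ 0) : centeringMatrix ι 𝕜 *ᵥ 1 = 0 := by
  ext i
  simp [mulVec_apply, hι]

lemma mul_self (hι : (Fintype.card ι : 𝕜) ≠ 0) :
    centeringMatrix ι 𝕜 * centeringMatrix ι 𝕜 = centeringMatrix ι 𝕜 := by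
  nth_rw 2 [centeringMatrix]
  rw [mul_sub, mul_one, mul_smul_comm, mul_vecMulVec, mulVec_one hι, zero_vecMulVec, smul_zero,
    sub_zero]

lemma dotProduct_mulVec_self (hι : (Fintype.card ι : 𝕜) ≠ 0) (x : ι → 𝕜) :
    x ⬝ᵥ centeringMatrix ι 𝕜 *ᵥ x = ∑ i, (x i - (Fintype.card ι : 𝕜)⁻¹ * ∑ k, x k) ^ 2 := by
  calc x ⬝ᵥ centeringMatrix ι 𝕜 *ᵥ x
      = (centeringMatrix ι 𝕜 *ᵥ x) ⬝ᵥ (centeringMatrix ι 𝕜 *ᵥ x) := by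
        nth_rw 1 [← mul_self hι]
        rw [← mulVec_mulVec, dotProduct_mulVec, ← mulVec_transpose, isSymm.eq]
    _ = ∑ i, (x i - (Fintype.card ι : 𝕜)⁻¹ * ∑ k, x k) ^ 2 := by
        simp only [dotProduct, mulVec_apply, sq]

end centeringMatrix

lemma sum_single_sub_single (hι : (Fintype.card ι : 𝕜) ≠ 0) (i : ι) :
    ∑ j, (Pi.single j 1 - Pi.single i 1 : ι → 𝕜) =
      centeringMatrix ι 𝕜 *ᵥ (-(Fintype.card ι : 𝕜) • Pi.single i 1) := by
  ext k
  have sum_single : ∑ j, (Pi.single j 1 : ι → 𝕜) = 1 := Finset.univ_sum_single 1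
  rw [mulVec_smul, Pi.smul_apply, centeringMatrix.mulVec_apply, Fintype.sum_pi_single',
    Finset.sum_sub_distrib, sum_single, Finset.sum_const, Finset.card_univ, Pi.sub_apply,
    Pi.one_apply, Pi.smul_apply, nsmul_eq_mul, smul_eq_mul]
  field_simp
  ring

lemma sum_vecMulVec_mulVec_single_sub_single (hι : (Fintype.card ι : 𝕜) ≠ 0) (A : Matrix m ι 𝕜) :
    ∑ i, ∑ j, vecMulVec (A *ᵥ Pi.single i 1) (Pi.single j 1 - Pi.single i 1) =
      -(Fintype.card ι : 𝕜) • (A * centeringMatrix ι 𝕜) := by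
  have sum_snd (i : ι) :
      ∑ j, vecMulVec (A *ᵥ Pi.single i 1) (Pi.single j 1 - Pi.single i 1) =
        vecMulVec (A *ᵥ Pi.single i 1) (∑ j, (Pi.single j 1 - Pi.single i 1)) :=
    (map_sum (vecMulVecBilin 𝕜 𝕜 (A *ᵥ Pi.single i 1)) _ _).symm
  simp only [sum_snd, sum_single_sub_single hι, mulVec_smul, vecMulVec_smul, ← Finset.smul_sum,
    sum_vecMulVec_mulVec_single, centeringMatrix.isSymm.eq]

lemma sum_vecMulVec_single_sub_single_self (hι : (Fintype.card ι : 𝕜) ≠ 0) :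
    ∑ i, ∑ j, vecMulVec (Pi.single j 1 - Pi.single i 1 : ι → 𝕜)
      (Pi.single j 1 - Pi.single i 1) = (2 * Fintype.card ι : 𝕜) • centeringMatrix ι 𝕜 := by
  have sum_left : ∑ i, ∑ j, vecMulVec (Pi.single i 1 : ι → 𝕜) (Pi.single j 1 - Pi.single i 1) =
      -(Fintype.card ι : 𝕜) • centeringMatrix ι 𝕜 := by
    simpa only [one_mulVec, Matrix.one_mul] using
      sum_vecMulVec_mulVec_single_sub_single hι (1 : Matrix ι ι 𝕜)
  have sum_right : ∑ i, ∑ j, vecMulVec (Pi.single j 1 : ι → 𝕜) (Pi.single j 1 - Pi.single i 1) =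
      (Fintype.card ι : 𝕜) • centeringMatrix ι 𝕜 := by
    rw [Finset.sum_comm, ← neg_neg (_ • _), ← neg_smul, ← sum_left]
    simp only [← Finset.sum_neg_distrib, ← vecMulVec_neg, neg_sub]
  simp only [sub_vecMulVec _ _ (_ - _), Finset.sum_sub_distrib, sum_right, sum_left]
  module

/-- The matrix `Id + β e_i (e_j − e_i)ᵀ` of one step of pull-gossip with mixing parameter `β`, in
which processor `i` pulls the value of processor `j`. -/
def pullGossip (β : 𝕜) (i j : ι) : Matrix ι ι 𝕜 :=
  1 + β • vecMulVec (Pi.single i 1) (Pi.single j 1 - Pi.single i 1)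

lemma sum_transpose_pullGossip_mul_centeringMatrix_mul (hι : (Fintype.card ι : 𝕜) ≠ 0) (β : 𝕜) :
    ∑ i : ι, ∑ j, (pullGossip β i j)ᵀ * centeringMatrix ι 𝕜 * pullGossip β i j =
      ((Fintype.card ι : 𝕜) ^ 2 - 2 * β * Fintype.card ι +
        2 * β ^ 2 * (Fintype.card ι - 1)) • centeringMatrix ι 𝕜 := by
  have cross : ∑ i, ∑ j, vecMulVec (centeringMatrix ι 𝕜 *ᵥ Pi.single i 1)
      (Pi.single j 1 - Pi.single i 1) = -(Fintype.card ι : 𝕜) • centeringMatrix ι 𝕜 := by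
    rw [sum_vecMulVec_mulVec_single_sub_single hι, centeringMatrix.mul_self hι]
  have cross_transpose : ∑ i, ∑ j, vecMulVec (Pi.single j 1 - Pi.single i 1)
      (centeringMatrix ι 𝕜 *ᵥ Pi.single i 1) = -(Fintype.card ι : 𝕜) • centeringMatrix ι 𝕜 := by
    simpa only [transpose_sum, transpose_vecMulVec, transpose_smul, centeringMatrix.isSymm.eq] using
      congr_arg transpose cross
  simp only [pullGossip, transpose_mul_mul_one_add_smul_vecMulVec centeringMatrix.isSymm,
    centeringMatrix.single_dotProduct_mulVec_single, Finset.sum_add_distrib, ← Finset.smul_sum,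
    cross, cross_transpose, sum_vecMulVec_single_sub_single_self hι, Finset.sum_const,
    Finset.card_univ]
  match_scalars
  field_simp
  ring

end Centering

theorem stmt_6_general {ι 𝕜 : Type*} [Fintype ι] [DecidableEq ι] [Field 𝕜]
    (hι : (Fintype.card ι : 𝕜) ≠ 0) (β : 𝕜) (E : Matrix ι ι 𝕜)
    (hE : E = ((Fintype.card ι : 𝕜) ^ 2)⁻¹ • ∑ q : ι × ι,
      ((pullGossip β q.1 q.2)ᵀ * pullGossip β q.1 q.2 - (Fintype.card ι : 𝕜)⁻¹ •
        ((pullGossip β q.1 q.2)ᵀ * vecMulVec 1 1 * pullGossip β q.1 q.2))) :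
    E = (1 - 2 * β * (1 - β) / Fintype.card ι - 2 * β ^ 2 / Fintype.card ι ^ 2) •
        centeringMatrix ι 𝕜 ∧
    E *ᵥ 1 = 0 ∧
    (∀ x : ι → 𝕜,
      x ⬝ᵥ E *ᵥ x =
        (1 - 2 * β * (1 - β) / Fintype.card ι - 2 * β ^ 2 / Fintype.card ι ^ 2) *
          ∑ i, (x i - (Fintype.card ι : 𝕜)⁻¹ * ∑ k, x k) ^ 2) := by
  have E_eq : E = (1 - 2 * β * (1 - β) / Fintype.card ι - 2 * β ^ 2 / Fintype.card ι ^ 2) •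
      centeringMatrix ι 𝕜 := by
    simp only [hE, ← centeringMatrix.transpose_mul_mul, Fintype.sum_prod_type,
      sum_transpose_pullGossip_mul_centeringMatrix_mul hι, smul_smul]
    congr 1
    field_simp
    ring
  refine ⟨E_eq, ?_, fun x => ?_⟩
  · rw [E_eq, smul_mulVec, centeringMatrix.mulVec_one hι, smul_zero]
  · rw [E_eq, smul_mulVec, dotProduct_smul, centeringMatrix.dotProduct_mulVec_self hι, smul_eq_mul]

/-- For the asynchronous pull-gossip update matrix `D = I + β e_I (e_J − e_I)ᵀ`
with `I, J` independent uniform on `{1, …, p}` (modeled by averaging over all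
`p²` equally likely pairs):
`E[Dᵀ D − (1/p) Dᵀ 𝟙 𝟙ᵀ D] = μ (I − (1/p) 𝟙 𝟙ᵀ)` with
`μ = 1 − 2β(1−β)/p − 2β²/p²`; in particular `𝟙` lies in the kernel, and the
quadratic form equals `μ ‖x − x̄ 𝟙‖²` for every `x`. -/
theorem stmt_6 (p : ℕ) (hp : 1 ≤ p) (β : ℝ) (hβ0 : 0 < β) (hβ1 : β < 1)
    (D : Fin p × Fin p → Matrix (Fin p) (Fin p) ℝ)
    (hD : ∀ q : Fin p × Fin p,
      D q = 1 + β • vecMulVec (Pi.single q.1 1)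
        (Pi.single q.2 1 - Pi.single q.1 1))
    (E : Matrix (Fin p) (Fin p) ℝ)
    (hE : E = ((p : ℝ) ^ 2)⁻¹ • ∑ q : Fin p × Fin p,
      ((D q)ᵀ * D q -
        (p : ℝ)⁻¹ • ((D q)ᵀ * vecMulVec (fun _ => (1 : ℝ)) (fun _ => (1 : ℝ)) * D q))) :
    E = (1 - 2 * β * (1 - β) / p - 2 * β ^ 2 / p ^ 2) •
        ((1 : Matrix (Fin p) (Fin p) ℝ) -
          (p : ℝ)⁻¹ • vecMulVec (fun _ => (1 : ℝ)) (fun _ => (1 : ℝ))) ∧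
    E.mulVec (fun _ => (1 : ℝ)) = 0 ∧
    (∀ x : Fin p → ℝ,
      x ⬝ᵥ E.mulVec x =
        (1 - 2 * β * (1 - β) / p - 2 * β ^ 2 / p ^ 2) *
          ∑ i, (x i - (p : ℝ)⁻¹ * ∑ k, x k) ^ 2) := by
  obtain rfl : D = fun q => pullGossip β q.1 q.2 := funext hD
  simpa only [centeringMatrix, Fintype.card_fin] using! stmt_6_general (ι := Fin p)
    (by rw [Fintype.card_fin]; positivity) β E (by simpa only [Fintype.card_fin] using! hE)
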